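/- Let 0 < p ≤ 1. Define on triples of n×n positive definite complex matrices the map P(A, B, C) = (1/p) C^{1/2} ∫₀¹ { (C^{-1/2}BC^{-1/2})^{1/2} [ λ((C^{-1/2}BC^{-1/2})^{-1/2}(C^{-1/2}AC^{-1/2})(C^{-1/2}BC^{-1/2})^{-1/2})^p + (1-λ)I ]^{1/p} (C^{-1/2}BC^{-1/2})^{1/2} }^{1-p} dλ · C^{1/2}. Then P is jointly concave in the Loewner order, and for positive real scalars (t₁, t₂, t₃) with t₁ ≠ t₂ (i.e., 1×1 matrices) its value is ((t₁ − t₂)/(t₁^p − t₂^p))·t₃^p, while for t₁ = t₂ it is (1/p)t₁^{1-p}t₃^p. Thus the function F₃(t₁,t₂,t₃) = ((t₁−t₂)/(t₁^p−t₂^p))t₃^p extends to a jointly concave map on triples of positive definite matrices. -/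

import Mathlib

open Matrix MeasureTheory
open scoped ComplexOrder

attribute [local instance] Matrix.normedAddCommGroup Matrix.normedSpace

/-- Matrix power by a real exponent via the functional calculus
(unitary diagonalization for Hermitian matrices; junk value otherwise). -/
noncomputable def mpow {n : ℕ} (A : Matrix (Fin n) (Fin n) ℂ) (q : ℝ) :
    Matrix (Fin n) (Fin n) ℂ :=
  if hA : A.IsHermitian then
    (hA.eigenvectorUnitary : Matrix (Fin n) (Fin n) ℂ) *
      Matrix.diagonal (fun i => ((hA.eigenvalues i ^ q : ℝ) : ℂ)) *
      (star (hA.eigenvectorUnitary : Matrix (Fin n) (Fin n) ℂ))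
  else 0

/-- `P(A,B,C) = (1/p) C^{1/2} ∫₀¹ {(C^{-1/2}BC^{-1/2})^{1/2}
[λ((C^{-1/2}BC^{-1/2})^{-1/2}(C^{-1/2}AC^{-1/2})(C^{-1/2}BC^{-1/2})^{-1/2})^p + (1-λ)I]^{1/p}
(C^{-1/2}BC^{-1/2})^{1/2}}^{1-p} dλ C^{1/2}`. -/
noncomputable def Pmap {n : ℕ} (p : ℝ) (A B C : Matrix (Fin n) (Fin n) ℂ) :
    Matrix (Fin n) (Fin n) ℂ :=
  (1 / p) •
    (mpow C (1 / 2) *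
      (∫ l in Set.Icc (0 : ℝ) 1,
        mpow
          (mpow (mpow C (-(1 / 2)) * B * mpow C (-(1 / 2))) (1 / 2) *
            mpow
              (l • mpow
                  (mpow (mpow C (-(1 / 2)) * B * mpow C (-(1 / 2))) (-(1 / 2)) *
                    (mpow C (-(1 / 2)) * A * mpow C (-(1 / 2))) *
                      mpow (mpow C (-(1 / 2)) * B * mpow C (-(1 / 2))) (-(1 / 2))) p +
                (1 - l) • 1)
              (1 / p) *
            mpow (mpow C (-(1 / 2)) * B * mpow C (-(1 / 2))) (1 / 2))
          (1 - p)) *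
      mpow C (1 / 2))

set_option linter.unusedVariables false
set_option linter.unusedSectionVars false

section AbstractPart

variable {A : Type*} [CStarAlgebra A] [PartialOrder A] [StarOrderedRing A]

lemma aux_lower {S : A} (hS : IsStrictlyPositive S) :
    ∃ r > (0:ℝ), algebraMap ℝ A r ≤ S := by
  cases subsingleton_or_nontrivial A
  · exact ⟨1, one_pos, le_of_eq (Subsingleton.elim _ _)⟩
  · exact (CFC.exists_pos_algebraMap_le_iff hS.isSelfAdjoint).2 fun x hx ↦ hS.spectrum_pos hx

lemma aux_conj_pos {K L S T : A} (hKL : star K * K + star L * L = 1)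
    (hS : IsStrictlyPositive S) (hT : IsStrictlyPositive T) :
    IsStrictlyPositive (star K * S * K + star L * T * L) := by
  obtain ⟨r, hr, h1⟩ := aux_lower hS
  obtain ⟨t, ht, h2⟩ := aux_lower hT
  have hm : 0 < min r t := lt_min hr ht
  have h1' : algebraMap ℝ A (min r t) ≤ S :=
    (algebraMap_mono A (min_le_left r t)).trans h1
  have h2' : algebraMap ℝ A (min r t) ≤ T :=
    (algebraMap_mono A (min_le_right r t)).trans h2
  have hpos : IsStrictlyPositive (algebraMap ℝ A (min r t)) :=
    isStrictlyPositive_algebraMap hm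
  refine hpos.of_le ?_
  calc algebraMap ℝ A (min r t)
      = star K * algebraMap ℝ A (min r t) * K + star L * algebraMap ℝ A (min r t) * L := by
        rw [← Algebra.commutes, ← Algebra.commutes, mul_assoc, mul_assoc, ← mul_add, hKL, mul_one]
    _ ≤ _ := add_le_add (star_left_conjugate_le_conjugate h1' K)
        (star_left_conjugate_le_conjugate h2' L)

lemma aux_inv_jensen {K L S T : A} (hKL : star K * K + star L * L = 1)
    (hS : IsStrictlyPositive S) (hT : IsStrictlyPositive T) :
    Ring.inverse (star K * S * K + star L * T * L) ≤
      star K * Ring.inverse S * K + star L * Ring.inverse T * L := by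
  have hZ := aux_conj_pos hKL hS hT
  set Z := star K * S * K + star L * T * L with hZdef
  have hSi := hS.ringInverse
  have hTi := hT.ringInverse
  have hZi := hZ.ringInverse
  have e1 := Ring.inverse_mul_cancel S hS.isUnit
  have e2 := Ring.inverse_mul_cancel T hT.isUnit
  have e1' := Ring.mul_inverse_cancel S hS.isUnit
  have e2' := Ring.mul_inverse_cancel T hT.isUnit
  have e3 := Ring.inverse_mul_cancel Z hZ.isUnit
  set Si := Ring.inverse S
  set Ti := Ring.inverse T
  set Y := Ring.inverse Z
  have hY : star Y = Y := hZi.isSelfAdjoint.star_eq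
  have hSs : star S = S := hS.isSelfAdjoint.star_eq
  have hTs : star T = T := hT.isSelfAdjoint.star_eq
  rw [← sub_nonneg]
  have key : star K * Si * K + star L * Ti * L - Y =
      star (K - S * K * Y) * Si * (K - S * K * Y) +
        star (L - T * L * Y) * Ti * (L - T * L * Y) := by
    have f1 : star (K - S * K * Y) * Si * (K - S * K * Y) =
        star K * Si * K - star K * (Si * S) * K * Y - Y * star K * (S * Si) * K
          + Y * (star K * S * (Si * S) * K) * Y := by
      simp only [star_sub, star_mul, hY, hSs]; noncomm_ring
    have f2 : star (L - T * L * Y) * Ti * (L - T * L * Y) =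
        star L * Ti * L - star L * (Ti * T) * L * Y - Y * star L * (T * Ti) * L
          + Y * (star L * T * (Ti * T) * L) * Y := by
      simp only [star_sub, star_mul, hY, hTs]; noncomm_ring
    rw [f1, f2, e1, e2, e1', e2']
    simp only [mul_one]
    have f3 : Y * (star K * S * K) * Y + Y * (star L * T * L) * Y = Y := by
      rw [← add_mul, ← mul_add, ← hZdef, e3, one_mul]
    have f4 : star K * K * Y + star L * L * Y = Y := by rw [← add_mul, hKL, one_mul]
    have f5 : Y * star K * K + Y * star L * L = Y := by
      rw [mul_assoc, mul_assoc, ← mul_add, hKL, mul_one]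
    calc star K * Si * K + star L * Ti * L - Y
        = star K * Si * K + star L * Ti * L - (star K * K * Y + star L * L * Y)
          - (Y * star K * K + Y * star L * L)
          + (Y * (star K * S * K) * Y + Y * (star L * T * L) * Y) := by
            rw [f3, f4, f5]; abel
      _ = _ := by abel
  rw [key]
  exact add_nonneg (star_left_conjugate_nonneg hSi.nonneg _)
    (star_left_conjugate_nonneg hTi.nonneg _)

lemma aux_integrand_eq {q t : ℝ} (hq : q ∈ Set.Ioo 0 1) (ht : 0 < t) {x : A} (hx : 0 ≤ x) :
    cfcₙ (Real.rpowIntegrand₀₁ q t) x =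
      algebraMap ℝ A (t ^ (q - 1)) - t ^ q • Ring.inverse (algebraMap ℝ A t + x) := by
  have hc : ContinuousOn (Real.rpowIntegrand₀₁ q t) (Set.Ici 0) :=
    Real.continuousOn_rpowIntegrand₀₁_Ici hq ht
  rw [cfcₙ_eq_cfc (hf := hc.mono (by grind)) (hf0 := by simp)]
  rw [Real.rpowIntegrand₀₁_eq_sub (by grind) ht]
  have hsp : ∀ r ∈ spectrum ℝ x, t + r ≠ 0 := fun r hr =>
    (add_pos_of_pos_of_nonneg ht (spectrum_nonneg_of_nonneg hx hr)).ne'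
  have hg : ContinuousOn (fun z : ℝ => (t + z)⁻¹) (spectrum ℝ x) := by
    exact ContinuousOn.inv₀ (by fun_prop) hsp
  have hspectrum :  ∀ r ∈ spectrum ℝ x, t + r ≠ 0 := hsp
  have hg2 : ContinuousOn (fun z : ℝ => t ^ q * (t + z)⁻¹) (spectrum ℝ x) :=
    continuousOn_const.mul hg
  have := cfc_sub (fun _ : ℝ => t ^ (q - 1)) (fun z : ℝ => t ^ q * (t + z)⁻¹) x
    continuousOn_const hg2
  have hsa : IsSelfAdjoint x := hx.isSelfAdjoint
  have hadd : ContinuousOn (fun z : ℝ => t + z) (spectrum ℝ x) := by fun_prop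
  rw [this, cfc_const _ _ hsa, cfc_const_mul _ _ _ hg,
    cfc_inv (fun z : ℝ => t + z) x hspectrum hadd hsa,
    cfc_const_add t (fun z => z) x continuousOn_id hsa, cfc_id' ℝ x hsa]

lemma aux_integrand_jensen {q t : ℝ} (hq : q ∈ Set.Ioo 0 1) (ht : 0 < t)
    {K L S T : A} (hKL : star K * K + star L * L = 1)
    (hS : IsStrictlyPositive S) (hT : IsStrictlyPositive T) :
    star K * cfcₙ (Real.rpowIntegrand₀₁ q t) S * K +
      star L * cfcₙ (Real.rpowIntegrand₀₁ q t) T * L ≤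
      cfcₙ (Real.rpowIntegrand₀₁ q t) (star K * S * K + star L * T * L) := by
  have hZ := aux_conj_pos hKL hS hT
  rw [aux_integrand_eq hq ht hS.nonneg, aux_integrand_eq hq ht hT.nonneg,
    aux_integrand_eq hq ht hZ.nonneg]
  have htp : IsStrictlyPositive (algebraMap ℝ A t) := isStrictlyPositive_algebraMap ht
  have hj := aux_inv_jensen hKL (htp.add_nonneg hS.nonneg) (htp.add_nonneg hT.nonneg)
  have hsum : ∀ r : ℝ, star K * algebraMap ℝ A r * K + star L * algebraMap ℝ A r * L =
      algebraMap ℝ A r := by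
    intro r
    rw [← Algebra.commutes, ← Algebra.commutes, mul_assoc, mul_assoc, ← mul_add, hKL, mul_one]
  have e : star K * (algebraMap ℝ A t + S) * K + star L * (algebraMap ℝ A t + T) * L =
      algebraMap ℝ A t + (star K * S * K + star L * T * L) := by
    rw [mul_add, add_mul, mul_add, add_mul]
    calc _ = (star K * algebraMap ℝ A t * K + star L * algebraMap ℝ A t * L) +
          (star K * S * K + star L * T * L) := by abel
      _ = _ := by rw [hsum]
  rw [e] at hj
  have hj2 := smul_le_smul_of_nonneg_left hj (Real.rpow_nonneg ht.le q)
  calc _ = (star K * algebraMap ℝ A (t ^ (q-1)) * K + star L * algebraMap ℝ A (t ^ (q-1)) * L) -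
        t ^ q • (star K * Ring.inverse (algebraMap ℝ A t + S) * K +
          star L * Ring.inverse (algebraMap ℝ A t + T) * L) := by
        simp only [mul_sub, sub_mul, smul_add, mul_smul_comm, smul_mul_assoc]; abel
    _ ≤ _ := by rw [hsum]; exact sub_le_sub_left hj2 _

/-- Operator monotone maps with the Jensen property on strictly positive elements. -/
structure JenMap (F : A → A) : Prop where
  pos : ∀ a, IsStrictlyPositive a → IsStrictlyPositive (F a)
  mono : ∀ a b, IsStrictlyPositive a → a ≤ b → F a ≤ F b
  jensen : ∀ K L S T : A, star K * K + star L * L = 1 → IsStrictlyPositive S →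
    IsStrictlyPositive T →
    star K * F S * K + star L * F T * L ≤ F (star K * S * K + star L * T * L)

lemma aux_rpow_jensen {q : ℝ} (hq : q ∈ Set.Icc 0 1)
    {K L S T : A} (hKL : star K * K + star L * L = 1)
    (hS : IsStrictlyPositive S) (hT : IsStrictlyPositive T) :
    star K * S ^ q * K + star L * T ^ q * L ≤ (star K * S * K + star L * T * L) ^ q := by
  have hZ := aux_conj_pos hKL hS hT
  rcases hq.1.eq_or_lt with h0 | h0
  · subst h0
    rw [CFC.rpow_zero S hS.nonneg, CFC.rpow_zero T hT.nonneg, CFC.rpow_zero _ hZ.nonneg]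
    simp [hKL]
  rcases hq.2.eq_or_lt with h1 | h1
  · subst h1
    rw [CFC.rpow_one S hS.nonneg, CFC.rpow_one T hT.nonneg, CFC.rpow_one _ hZ.nonneg]
  lift q to NNReal using h0.le
  have hq0 : 0 < q := by exact_mod_cast h0
  have hq1 : q < 1 := by exact_mod_cast h1
  rw [← CFC.nnrpow_eq_rpow hq0, ← CFC.nnrpow_eq_rpow hq0, ← CFC.nnrpow_eq_rpow hq0]
  obtain ⟨μ, hμ⟩ := CFC.exists_measure_nnrpow_eq_integral_cfcₙ_rpowIntegrand₀₁ A (p := q) ⟨hq0, hq1⟩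
  obtain ⟨iS, eS⟩ := hμ S hS.nonneg
  obtain ⟨iT, eT⟩ := hμ T hT.nonneg
  obtain ⟨iZ, eZ⟩ := hμ _ hZ.nonneg
  rw [eS, eT, eZ]
  have c1 := (ContinuousLinearMap.mulLeftRight ℂ A (star K) K).integral_comp_comm iS
  have c2 := (ContinuousLinearMap.mulLeftRight ℂ A (star L) L).integral_comp_comm iT
  have i1 := (ContinuousLinearMap.mulLeftRight ℂ A (star K) K).integrable_comp iS
  have i2 := (ContinuousLinearMap.mulLeftRight ℂ A (star L) L).integrable_comp iT
  simp only [ContinuousLinearMap.mulLeftRight_apply] at c1 c2 i1 i2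
  rw [← c1, ← c2, ← integral_add i1 i2]
  refine integral_mono_ae (i1.add i2) iZ ?_
  filter_upwards [ae_restrict_mem measurableSet_Ioi] with t ht
  exact aux_integrand_jensen ⟨h0, h1⟩ ht hKL hS hT

lemma JenMap.rpow {q : ℝ} (hq : q ∈ Set.Icc 0 1) : JenMap (fun a : A => a ^ q) where
  pos a ha := ha.rpow a q
  mono a b _ hab := CFC.monotone_rpow hq hab
  jensen K L S T h hS hT := aux_rpow_jensen hq h hS hT

lemma JenMap.id : JenMap (fun a : A => a) where
  pos a ha := ha
  mono a b _ hab := hab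
  jensen K L S T h hS hT := le_rfl

lemma JenMap.one : JenMap (fun _ : A => (1 : A)) where
  pos a ha := isStrictlyPositive_one
  mono a b _ hab := le_rfl
  jensen K L S T h hS hT := by simp [h]

lemma JenMap.add_smul {F G : A → A} (hF : JenMap F) (hG : JenMap G) {c : ℝ} (hc : 0 ≤ c) :
    JenMap (fun a => F a + c • G a) where
  pos a ha := (hF.pos a ha).add_nonneg (smul_nonneg hc (hG.pos a ha).nonneg)
  mono a b ha hab := add_le_add (hF.mono a b ha hab)
    (smul_le_smul_of_nonneg_left (hG.mono a b ha hab) hc)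
  jensen K L S T h hS hT := by
    refine le_trans (le_of_eq ?_) (add_le_add (hF.jensen K L S T h hS hT)
      (smul_le_smul_of_nonneg_left (hG.jensen K L S T h hS hT) hc))
    simp only [mul_add, add_mul, smul_add, mul_smul_comm, smul_mul_assoc]; abel

lemma JenMap.smul {c : ℝ} (hc : 0 < c) : JenMap (fun a : A => c • a) where
  pos a ha := ha.smul hc
  mono a b _ hab := smul_le_smul_of_nonneg_left hab hc.le
  jensen K L S T h hS hT := by
    simp only [smul_add, mul_smul_comm, smul_mul_assoc]; exact le_rfl

lemma JenMap.comp {F G : A → A} (hF : JenMap F) (hG : JenMap G) :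
    JenMap (fun a => F (G a)) where
  pos a ha := hF.pos _ (hG.pos a ha)
  mono a b ha hab := hF.mono _ _ (hG.pos a ha) (hG.mono a b ha hab)
  jensen K L S T h hS hT :=
    (hF.jensen K L _ _ h (hG.pos S hS) (hG.pos T hT)).trans
      (hF.mono _ _ (aux_conj_pos h (hG.pos S hS) (hG.pos T hT)) (hG.jensen K L S T h hS hT))

lemma JenMap.iterate {F : A → A} (hF : JenMap F) (k : ℕ) : JenMap (F^[k]) := by
  induction k with
  | zero => exact JenMap.id
  | succ k ih =>
    have := hF.comp ih
    convert this using 1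
    ext a; rw [Function.iterate_succ_apply']

lemma JenMap.congr {F G : A → A} (hF : JenMap F) (h : ∀ a, IsStrictlyPositive a → F a = G a) :
    JenMap G where
  pos a ha := h a ha ▸ hF.pos a ha
  mono a b ha hab := by
    rw [← h a ha, ← h b (ha.of_le hab)]; exact hF.mono a b ha hab
  jensen K L S T hh hS hT := by
    rw [← h S hS, ← h T hT, ← h _ (aux_conj_pos hh hS hT)]; exact hF.jensen K L S T hh hS hT

lemma JenMap.of_tendsto {Fs : ℕ → A → A} {F : A → A} (hFs : ∀ n, JenMap (Fs n))
    (hF : ∀ a, IsStrictlyPositive a → IsStrictlyPositive (F a))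
    (hlim : ∀ a, IsStrictlyPositive a →
      Filter.Tendsto (fun n => Fs n a) Filter.atTop (nhds (F a))) : JenMap F where
  pos := hF
  mono a b ha hab := le_of_tendsto_of_tendsto' (hlim a ha) (hlim b (ha.of_le hab))
    (fun n => (hFs n).mono a b ha hab)
  jensen K L S T h hS hT := by
    refine le_of_tendsto_of_tendsto' ?_ (hlim _ (aux_conj_pos h hS hT))
      (fun n => (hFs n).jensen K L S T h hS hT)
    exact (((hlim S hS).const_mul _).mul_const _).add (((hlim T hT).const_mul _).mul_const _)

end AbstractPart
/-- Scalar Euler step for the flow with speed `y^(1-p)`. -/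
noncomputable def eulerStep (p h y : ℝ) : ℝ := y + h * y ^ (1 - p)

lemma euler_upper {p h y : ℝ} (hp0 : 0 < p) (hp1 : p ≤ 1) (hh : 0 ≤ h) (hy : 0 < y) :
    (eulerStep p h y) ^ p ≤ y ^ p + p * h := by
  have hu : 0 < y ^ p := Real.rpow_pos_of_pos hy p
  have hz : 0 ≤ h / y ^ p := by positivity
  have e : eulerStep p h y = y * (1 + h / y ^ p) := by
    unfold eulerStep; rw [Real.rpow_sub hy, Real.rpow_one]; field_simp
  rw [e, Real.mul_rpow hy.le (by positivity)]
  have := rpow_one_add_le_one_add_mul_self (s := h / y ^ p) (by linarith) hp0.le hp1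
  calc _ ≤ y ^ p * (1 + p * (h / y ^ p)) := by gcongr
    _ = _ := by field_simp

lemma euler_lower {p h y ε : ℝ} (hp0 : 0 < p) (hp1 : p ≤ 1) (hh : 0 ≤ h) (hε : 0 < ε)
    (hy : ε ≤ y) :
    y ^ p + p * h - h ^ 2 / ε ^ p ≤ (eulerStep p h y) ^ p := by
  have hy0 : 0 < y := hε.trans_le hy
  have hu : 0 < y ^ p := Real.rpow_pos_of_pos hy0 p
  have he : 0 < ε ^ p := Real.rpow_pos_of_pos hε p
  have hle : ε ^ p ≤ y ^ p := Real.rpow_le_rpow hε.le hy hp0.le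
  have hz : 0 ≤ h / y ^ p := by positivity
  have e : eulerStep p h y = y * (1 + h / y ^ p) := by
    unfold eulerStep; rw [Real.rpow_sub hy0, Real.rpow_one]; field_simp
  rw [e, Real.mul_rpow hy0.le (by positivity)]
  set z := h / y ^ p with hzdef
  have hb := rpow_one_add_le_one_add_mul_self (s := z) (p := 1 - p) (by linarith)
    (by linarith) (by linarith)
  have hpos : 0 < (1 + z) ^ (1 - p) := Real.rpow_pos_of_pos (by linarith) _
  have hmul : (1 + z) ^ p * (1 + z) ^ (1 - p) = 1 + z := by
    rw [← Real.rpow_add (by linarith)]; simp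
  have hX : 0 < (1 + z) ^ p := Real.rpow_pos_of_pos (by linarith) _
  have h1 : 1 + z ≤ (1 + z) ^ p * (1 + (1 - p) * z) := by
    calc 1 + z = (1 + z) ^ p * (1 + z) ^ (1 - p) := hmul.symm
      _ ≤ _ := by gcongr
  have h2 : 1 + p * z - z ^ 2 ≤ (1 + z) ^ p := by
    by_contra hcon
    push Not at hcon
    have hq : 0 ≤ (1 - p) * z := mul_nonneg (by linarith) hz
    have hw : 0 < 1 + (1 - p) * z := by linarith
    have : (1 + z) ^ p * (1 + (1 - p) * z) < (1 + p * z - z ^ 2) * (1 + (1 - p) * z) := by gcongr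
    have h3 : 0 ≤ p * z ^ 2 := by positivity
    nlinarith [mul_nonneg hq (sq_nonneg z), mul_nonneg h3 hp0.le, mul_nonneg hp0.le hz]
  have h4 : y ^ p * z ^ 2 ≤ h ^ 2 / ε ^ p := by
    have : y ^ p * z ^ 2 = h ^ 2 / y ^ p := by rw [hzdef]; field_simp
    rw [this]; gcongr
  have h5 : y ^ p * z = h := by rw [hzdef]; field_simp
  calc y ^ p + p * h - h ^ 2 / ε ^ p ≤ y ^ p + p * (y ^ p * z) - y ^ p * z ^ 2 := by
        rw [h5]; linarith
    _ = y ^ p * (1 + p * z - z ^ 2) := by ring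
    _ ≤ _ := by gcongr

lemma euler_ge {p h y : ℝ} (hh : 0 ≤ h) (hy : 0 < y) : y ≤ eulerStep p h y := by
  unfold eulerStep
  have : 0 ≤ y ^ (1 - p) := Real.rpow_nonneg hy.le _
  nlinarith [mul_nonneg hh this]

lemma euler_iter {p h y ε : ℝ} (hp0 : 0 < p) (hp1 : p ≤ 1) (hh : 0 ≤ h) (hε : 0 < ε)
    (hy : ε ≤ y) (k : ℕ) :
    ε ≤ (eulerStep p h)^[k] y ∧ ((eulerStep p h)^[k] y) ^ p ≤ y ^ p + k * (p * h) ∧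
      y ^ p + k * (p * h) - k * (h ^ 2 / ε ^ p) ≤ ((eulerStep p h)^[k] y) ^ p := by
  induction k with
  | zero => simp [hy]
  | succ k ih =>
    obtain ⟨h1, h2, h3⟩ := ih
    rw [Function.iterate_succ_apply']
    have a1 := euler_upper hp0 hp1 hh (hε.trans_le h1)
    have a2 := euler_lower hp0 hp1 hh hε h1
    have a3 := euler_ge (p := p) hh (hε.trans_le h1)
    refine ⟨h1.trans a3, ?_, ?_⟩ <;> push_cast <;> linarith

section AbstractPart2

variable {A : Type*} [CStarAlgebra A] [PartialOrder A] [StarOrderedRing A]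

/-- Operator Euler step. -/
noncomputable def eulerOp (p h : ℝ) (a : A) : A := a + h • a ^ (1 - p)

lemma JenMap.eulerOp {p h : ℝ} (hp0 : 0 < p) (hp1 : p ≤ 1) (hh : 0 ≤ h) :
    JenMap (eulerOp p h : A → A) :=
  JenMap.id.add_smul (JenMap.rpow ⟨by linarith, by linarith⟩) hh

lemma euler_contOn {p h : ℝ} (hp0 : 0 < p) (hp1 : p ≤ 1) (hh : 0 ≤ h) (k : ℕ) :
    ContinuousOn ((eulerStep p h)^[k]) (Set.Ioi 0) := by
  induction k with
  | zero => exact continuousOn_id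
  | succ k ih =>
    rw [Function.iterate_succ']
    refine ContinuousOn.comp (t := Set.Ioi 0) ?_ ih ?_
    · unfold eulerStep
      refine continuousOn_id.add (continuousOn_const.mul ?_)
      exact continuousOn_id.rpow_const (fun x hx => Or.inl (ne_of_gt hx))
    · intro x hx
      exact lt_of_lt_of_le hx (euler_iter hp0 hp1 hh hx le_rfl k).1

lemma euler_cfc {p h : ℝ} (hp0 : 0 < p) (hp1 : p ≤ 1) (hh : 0 ≤ h) {a : A}
    (ha : IsStrictlyPositive a) (k : ℕ) :
    (eulerOp p h)^[k] a = cfc ((eulerStep p h)^[k]) a := by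
  have hsa := ha.isSelfAdjoint
  have hsp : spectrum ℝ a ⊆ Set.Ioi 0 := fun x hx => ha.spectrum_pos hx
  induction k with
  | zero => simpa using (cfc_id ℝ a hsa).symm
  | succ k ih =>
    have hc := (euler_contOn hp0 hp1 hh k).mono hsp
    have hpos : ∀ x ∈ spectrum ℝ a, 0 < (eulerStep p h)^[k] x := fun x hx =>
      lt_of_lt_of_le (hsp hx) (euler_iter hp0 hp1 hh (hsp hx) le_rfl k).1
    have hc2 : ContinuousOn (fun r => ((eulerStep p h)^[k] r) ^ (1 - p)) (spectrum ℝ a) :=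
      hc.rpow_const (fun x hx => Or.inl (hpos x hx).ne')
    have hc3 : ContinuousOn (fun r => h * ((eulerStep p h)^[k] r) ^ (1 - p)) (spectrum ℝ a) :=
      continuousOn_const.mul hc2
    rw [Function.iterate_succ_apply', ih, eulerOp, CFC.cfc_rpow hpos hc hsa,
      ← cfc_const_mul h _ a hc2, ← cfc_add (a := a) _ _ hc hc3]
    refine cfc_congr fun x _ => ?_
    rw [Function.iterate_succ_apply']
    rfl

lemma euler_tendsto {p s : ℝ} (hp0 : 0 < p) (hp1 : p ≤ 1) (hs : 0 ≤ s) {a : A}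
    (ha : IsStrictlyPositive a) :
    Filter.Tendsto (fun n : ℕ => (eulerOp p (s / (p * (n + 1))))^[n + 1] a) Filter.atTop
      (nhds ((a ^ p + algebraMap ℝ A s) ^ (1 / p))) := by
  have hsa := ha.isSelfAdjoint
  obtain ⟨ε, hε, hle⟩ := aux_lower ha
  have hsp : spectrum ℝ a ⊆ Set.Ici ε := fun x hx => by
    have := (algebraMap_le_iff_le_spectrum (a := a) (r := ε) hsa).1 hle x hx
    exact this
  have hsp0 : spectrum ℝ a ⊆ Set.Ioi 0 := fun x hx => hε.trans_le (hsp hx)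
  have hep : 0 < ε ^ p := Real.rpow_pos_of_pos hε p
  have hap : IsStrictlyPositive (a ^ p) := ha.rpow a p
  have hlimpos : IsStrictlyPositive (a ^ p + algebraMap ℝ A s) :=
    hap.add_nonneg (algebraMap_nonneg A hs)
  have hhn : ∀ n : ℕ, 0 ≤ s / (p * ((n : ℝ) + 1)) := fun n => by positivity
  have hEpos : ∀ n : ℕ, IsStrictlyPositive ((eulerOp p (s / (p * (n + 1))))^[n + 1] a) :=
    fun n => ((JenMap.eulerOp hp0 hp1 (hhn n)).iterate (n + 1)).pos a ha
  -- convergence of p-th powers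
  have hmain : Filter.Tendsto
      (fun n : ℕ => ((eulerOp p (s / (p * (n + 1))))^[n + 1] a) ^ p) Filter.atTop
      (nhds (a ^ p + algebraMap ℝ A s)) := by
    rw [tendsto_iff_norm_sub_tendsto_zero]
    have hb : Filter.Tendsto (fun n : ℕ => (s ^ 2 / (p ^ 2 * ε ^ p)) * (1 / ((n : ℝ) + 1)))
        Filter.atTop (nhds 0) := by
      simpa using tendsto_one_div_add_atTop_nhds_zero_nat.const_mul (s ^ 2 / (p ^ 2 * ε ^ p))
    refine squeeze_zero (fun n => norm_nonneg _) (fun n => ?_) hb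
    have hc := (euler_contOn hp0 hp1 (hhn n) (n + 1)).mono hsp0
    have hpos : ∀ x ∈ spectrum ℝ a, 0 < (eulerStep p (s / (p * (n + 1))))^[n + 1] x :=
      fun x hx => hε.trans_le (euler_iter hp0 hp1 (hhn n) hε (hsp hx) (n + 1)).1
    have hc2 : ContinuousOn
        (fun r => ((eulerStep p (s / (p * (n + 1))))^[n + 1] r) ^ p) (spectrum ℝ a) :=
      hc.rpow_const (fun x hx => Or.inl (hpos x hx).ne')
    have hc3 : ContinuousOn (fun r : ℝ => r ^ p) (spectrum ℝ a) :=
      continuousOn_id.rpow_const (fun x hx => Or.inl (hsp0 hx).ne')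
    have hc4 : ContinuousOn (fun r : ℝ => r ^ p + s) (spectrum ℝ a) :=
      hc3.add continuousOn_const
    rw [euler_cfc hp0 hp1 (hhn n) ha, CFC.cfc_rpow hpos hc hsa, CFC.rpow_eq_cfc_real ha.nonneg,
      ← cfc_add_const s (fun r : ℝ => r ^ p) a hc3 hsa, ← cfc_sub _ _ a hc2 hc4]
    refine norm_cfc_le (by positivity) fun x hx => ?_
    obtain ⟨_, b1, b2⟩ := euler_iter hp0 hp1 (hhn n) hε (hsp hx) (n + 1)
    have e1 : ((n + 1 : ℕ) : ℝ) * (p * (s / (p * ((n : ℝ) + 1)))) = s := by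
      push_cast; field_simp
    have e2 : ((n + 1 : ℕ) : ℝ) * ((s / (p * ((n : ℝ) + 1))) ^ 2 / ε ^ p) =
        (s ^ 2 / (p ^ 2 * ε ^ p)) * (1 / ((n : ℝ) + 1)) := by
      push_cast; field_simp
    rw [e1] at b1 b2
    rw [e2] at b2
    rw [Real.norm_eq_abs, abs_le]
    have hnn : 0 ≤ (s ^ 2 / (p ^ 2 * ε ^ p)) * (1 / ((n : ℝ) + 1)) := by positivity
    constructor <;> linarith
  have hcont := (CFC.continuousOn_rpow (A := A) (1 / p)) _ hlimpos
  have := hcont.tendsto.comp (tendsto_nhdsWithin_iff.2 ⟨hmain,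
    Filter.Eventually.of_forall fun n => (hEpos n).rpow _ p⟩)
  refine this.congr fun n => ?_
  simp only [Function.comp]
  rw [one_div]
  exact CFC.rpow_rpow_inv _ p hp0.ne' (hEpos n)

lemma JenMap.shift {p s : ℝ} (hp0 : 0 < p) (hp1 : p ≤ 1) (hs : 0 ≤ s) :
    JenMap (fun a : A => (a ^ p + algebraMap ℝ A s) ^ (1 / p)) := by
  refine JenMap.of_tendsto
    (Fs := fun n : ℕ => (_root_.eulerOp p (s / (p * (n + 1))))^[n + 1]) (fun n => ?_) ?_ ?_
  · exact (JenMap.eulerOp hp0 hp1 (by positivity)).iterate (n + 1)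
  · intro a ha
    exact ((ha.rpow a p).add_nonneg (algebraMap_nonneg A hs)).rpow _ _
  · intro a ha
    exact euler_tendsto hp0 hp1 hs ha

/-- The scalar-type power mean with `1`. -/
lemma JenMap.powerMean {p l : ℝ} (hp0 : 0 < p) (hp1 : p ≤ 1) (hl0 : 0 ≤ l) (hl1 : l ≤ 1) :
    JenMap (fun a : A => (l • a ^ p + (1 - l) • (1 : A)) ^ (1 / p)) := by
  rcases hl0.eq_or_lt with h | h
  · subst h
    simpa using (JenMap.one (A := A))
  · have hc : 0 < l ^ (1 / p) := Real.rpow_pos_of_pos h _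
    refine ((JenMap.shift hp0 hp1 (s := 1 - l) (by linarith)).comp (JenMap.smul hc)).congr ?_
    intro a ha
    have hsa := ha.isSelfAdjoint
    have e : (l ^ (1 / p) • a) ^ p = l • a ^ p := by
      have hc3 : ContinuousOn (fun r : ℝ => r ^ p) (spectrum ℝ a) :=
        continuousOn_id.rpow_const (fun x hx => Or.inl (ha.spectrum_pos hx).ne')
      rw [CFC.rpow_eq_cfc_real ha.nonneg, ← cfc_const_mul l _ a hc3]
      have e2 : l ^ (1 / p) • a = cfc (fun x : ℝ => l ^ (1 / p) * x) a := by
        rw [cfc_const_mul (l ^ (1 / p)) (fun x : ℝ => x) a (by fun_prop), cfc_id' ℝ a hsa]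
      rw [e2, CFC.cfc_rpow (fun x hx => mul_pos hc (ha.spectrum_pos hx))
        (continuousOn_const.mul continuousOn_id) hsa]
      refine cfc_congr fun x hx => ?_
      change (l ^ (1 / p) * x) ^ p = l * x ^ p
      rw [Real.mul_rpow hc.le (ha.spectrum_pos hx).le, ← Real.rpow_mul h.le]
      rw [one_div_mul_cancel hp0.ne', Real.rpow_one]
    simp only [e, Algebra.algebraMap_eq_smul_one]

/-- The operator perspective. -/
noncomputable def persp (F : A → A) (X Y : A) : A :=
  Y ^ (1 / 2 : ℝ) * F (Y ^ (-(1 / 2) : ℝ) * X * Y ^ (-(1 / 2) : ℝ)) * Y ^ (1 / 2 : ℝ)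

lemma rpow_sa (Y : A) (q : ℝ) : star (Y ^ q) = Y ^ q :=
  (CFC.rpow_nonneg (a := Y) (y := q)).isSelfAdjoint.star_eq

lemma conj_rpow_pos {X Y : A} (hX : IsStrictlyPositive X) (hY : IsStrictlyPositive Y) (q : ℝ) :
    IsStrictlyPositive (Y ^ q * X * Y ^ q) := by
  have := ((hY.rpow Y q).isUnit.isStrictlyPositive_star_left_conjugate_iff (a := X)).2 hX
  rwa [rpow_sa] at this

lemma half_mul_half {Y : A} (hY : IsStrictlyPositive Y) :
    Y ^ (1 / 2 : ℝ) * Y ^ (1 / 2 : ℝ) = Y := by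
  rw [← CFC.rpow_add hY.isUnit]; norm_num; exact CFC.rpow_one Y hY.nonneg

lemma half_mul_neg {Y : A} (hY : IsStrictlyPositive Y) :
    Y ^ (1 / 2 : ℝ) * Y ^ (-(1 / 2) : ℝ) = 1 := CFC.rpow_mul_rpow_neg _ hY

lemma neg_mul_half {Y : A} (hY : IsStrictlyPositive Y) :
    Y ^ (-(1 / 2) : ℝ) * Y ^ (1 / 2 : ℝ) = 1 := CFC.rpow_neg_mul_rpow _ hY

lemma persp_pos {F : A → A} (hF : JenMap F) {X Y : A} (hX : IsStrictlyPositive X)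
    (hY : IsStrictlyPositive Y) : IsStrictlyPositive (persp F X Y) :=
  conj_rpow_pos (hF.pos _ (conj_rpow_pos hX hY _)) hY _

lemma persp_jensen_gen {F : A → A} (hF : JenMap F) {K L X₁ X₂ Y₁ Y₂ X Y : A}
    (hX₁ : IsStrictlyPositive X₁) (hX₂ : IsStrictlyPositive X₂)
    (hY₁ : IsStrictlyPositive Y₁) (hY₂ : IsStrictlyPositive Y₂)
    (hYp : IsStrictlyPositive Y)
    (hX : X = star K * X₁ * K + star L * X₂ * L)
    (hY : Y = star K * Y₁ * K + star L * Y₂ * L) :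
    star K * persp F X₁ Y₁ * K + star L * persp F X₂ Y₂ * L ≤ persp F X Y := by
  set Z := Y ^ (-(1 / 2) : ℝ) with hZ
  set R := Y ^ (1 / 2 : ℝ) with hR
  have hZs : star Z = Z := rpow_sa _ _
  have hRs : star R = R := rpow_sa _ _
  have hRZ : R * Z = 1 := half_mul_neg hYp
  have hZR : Z * R = 1 := neg_mul_half hYp
  have hZYZ : Z * Y * Z = 1 := by
    rw [← half_mul_half hYp, ← hR, ← mul_assoc, hZR, one_mul, hRZ]
  have conjform : ∀ M N W : A, IsStrictlyPositive N →
      star (N ^ (1 / 2 : ℝ) * M * Z) * W * (N ^ (1 / 2 : ℝ) * M * Z) =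
      Z * (star M * (N ^ (1 / 2 : ℝ) * W * N ^ (1 / 2 : ℝ)) * M) * Z := by
    intro M N W hN
    simp only [star_mul, hZs, rpow_sa, mul_assoc]
  have cancel : ∀ N W : A, IsStrictlyPositive N →
      N ^ (1 / 2 : ℝ) * (N ^ (-(1 / 2) : ℝ) * W * N ^ (-(1 / 2) : ℝ)) * N ^ (1 / 2 : ℝ) = W := by
    intro N W hN
    calc _ = (N ^ (1 / 2 : ℝ) * N ^ (-(1 / 2) : ℝ)) * W *
          (N ^ (-(1 / 2) : ℝ) * N ^ (1 / 2 : ℝ)) := by simp only [mul_assoc]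
      _ = W := by rw [half_mul_neg hN, neg_mul_half hN, one_mul, mul_one]
  have h1 : star (Y₁ ^ (1 / 2 : ℝ) * K * Z) * (Y₁ ^ (1 / 2 : ℝ) * K * Z) +
      star (Y₂ ^ (1 / 2 : ℝ) * L * Z) * (Y₂ ^ (1 / 2 : ℝ) * L * Z) = 1 := by
    have a1 := conjform K Y₁ 1 hY₁
    have a2 := conjform L Y₂ 1 hY₂
    rw [mul_one, mul_one, half_mul_half hY₁] at a1
    rw [mul_one, mul_one, half_mul_half hY₂] at a2
    rw [a1, a2, ← add_mul, ← mul_add, ← hY, hZYZ]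
  have hj := hF.jensen _ _ _ _ h1 (conj_rpow_pos hX₁ hY₁ (-(1 / 2)))
    (conj_rpow_pos hX₂ hY₂ (-(1 / 2)))
  rw [conjform _ _ _ hY₁, conjform _ _ _ hY₂, conjform _ _ _ hY₁, conjform _ _ _ hY₂,
    cancel _ _ hY₁, cancel _ _ hY₂, ← add_mul, ← mul_add, ← add_mul, ← mul_add, ← hX] at hj
  have hj2 := star_left_conjugate_le_conjugate hj R
  rw [hRs] at hj2
  refine le_trans (le_of_eq ?_) hj2
  change _ = R * (Z * (star K * persp F X₁ Y₁ * K + star L * persp F X₂ Y₂ * L) * Z) * R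
  calc _ = (R * Z) * (star K * persp F X₁ Y₁ * K + star L * persp F X₂ Y₂ * L) * (Z * R) := by
        rw [hRZ, hZR, one_mul, mul_one]
    _ = _ := by simp only [mul_assoc]

/-- The integrand of the map `P`, sandwiched. -/
noncomputable def Hmap (F G : A → A) (X Y C : A) : A :=
  C ^ (1 / 2 : ℝ) * G (persp F (C ^ (-(1 / 2) : ℝ) * X * C ^ (-(1 / 2) : ℝ))
    (C ^ (-(1 / 2) : ℝ) * Y * C ^ (-(1 / 2) : ℝ))) * C ^ (1 / 2 : ℝ)

lemma Hmap_concave {F G : A → A} (hF : JenMap F) (hG : JenMap G) {X₁ X₂ Y₁ Y₂ C₁ C₂ : A}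
    (hX₁ : IsStrictlyPositive X₁) (hX₂ : IsStrictlyPositive X₂)
    (hY₁ : IsStrictlyPositive Y₁) (hY₂ : IsStrictlyPositive Y₂)
    (hC₁ : IsStrictlyPositive C₁) (hC₂ : IsStrictlyPositive C₂)
    {α : ℝ} (h0 : 0 ≤ α) (h1 : α ≤ 1) :
    α • Hmap F G X₁ Y₁ C₁ + (1 - α) • Hmap F G X₂ Y₂ C₂ ≤
      Hmap F G (α • X₁ + (1 - α) • X₂) (α • Y₁ + (1 - α) • Y₂) (α • C₁ + (1 - α) • C₂) := by
  have comb : ∀ {U V : A}, IsStrictlyPositive U → IsStrictlyPositive V →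
      IsStrictlyPositive (α • U + (1 - α) • V) := by
    intro U V hU hV
    rcases h0.eq_or_lt with h | h
    · subst h; simpa using hV
    · exact (hU.smul h).add_nonneg (smul_nonneg (by linarith) hV.nonneg)
  have hC := comb hC₁ hC₂
  set C := α • C₁ + (1 - α) • C₂ with hCdef
  set Z := C ^ (-(1 / 2) : ℝ) with hZ
  set R := C ^ (1 / 2 : ℝ) with hR
  have hZs : star Z = Z := rpow_sa _ _
  have hRs : star R = R := rpow_sa _ _
  have hRZ : R * Z = 1 := half_mul_neg hC
  have hZR : Z * R = 1 := neg_mul_half hC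
  have hZCZ : Z * C * Z = 1 := by
    rw [← half_mul_half hC, ← hR, ← mul_assoc, hZR, one_mul, hRZ]
  have conjform : ∀ (r : ℝ) (N W : A), 0 ≤ r →
      star (Real.sqrt r • (N ^ (1 / 2 : ℝ) * Z)) * W * (Real.sqrt r • (N ^ (1 / 2 : ℝ) * Z)) =
      Z * (r • (N ^ (1 / 2 : ℝ) * W * N ^ (1 / 2 : ℝ))) * Z := by
    intro r N W hr
    have : star (Real.sqrt r • (N ^ (1 / 2 : ℝ) * Z)) = Real.sqrt r • (Z * N ^ (1 / 2 : ℝ)) := by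
      rw [star_smul, star_mul, hZs, rpow_sa]; simp
    rw [this]
    simp only [smul_mul_assoc, mul_smul_comm, smul_smul, Real.mul_self_sqrt hr, mul_assoc]
  have cancel : ∀ N W : A, IsStrictlyPositive N →
      N ^ (1 / 2 : ℝ) * (N ^ (-(1 / 2) : ℝ) * W * N ^ (-(1 / 2) : ℝ)) * N ^ (1 / 2 : ℝ) = W := by
    intro N W hN
    calc _ = (N ^ (1 / 2 : ℝ) * N ^ (-(1 / 2) : ℝ)) * W *
          (N ^ (-(1 / 2) : ℝ) * N ^ (1 / 2 : ℝ)) := by simp only [mul_assoc]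
      _ = W := by rw [half_mul_neg hN, neg_mul_half hN, one_mul, mul_one]
  have h1' : 0 ≤ 1 - α := by linarith
  set K := Real.sqrt α • (C₁ ^ (1 / 2 : ℝ) * Z) with hK
  set L := Real.sqrt (1 - α) • (C₂ ^ (1 / 2 : ℝ) * Z) with hL
  have hKL : star K * K + star L * L = 1 := by
    have a1 := conjform α C₁ 1 h0
    have a2 := conjform (1 - α) C₂ 1 h1'
    rw [mul_one, mul_one, half_mul_half hC₁] at a1
    rw [mul_one, mul_one, half_mul_half hC₂] at a2
    rw [hK, hL, a1, a2, ← add_mul, ← mul_add, ← hCdef, hZCZ]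
  have split : ∀ U V : A, Z * (α • U + (1 - α) • V) * Z =
      star K * (C₁ ^ (-(1 / 2) : ℝ) * U * C₁ ^ (-(1 / 2) : ℝ)) * K +
      star L * (C₂ ^ (-(1 / 2) : ℝ) * V * C₂ ^ (-(1 / 2) : ℝ)) * L := by
    intro U V
    rw [hK, hL, conjform _ _ _ h0, conjform _ _ _ h1', cancel _ _ hC₁, cancel _ _ hC₂,
      ← add_mul, ← mul_add]
  have pX₁ := conj_rpow_pos hX₁ hC₁ (-(1 / 2))
  have pX₂ := conj_rpow_pos hX₂ hC₂ (-(1 / 2))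
  have pY₁ := conj_rpow_pos hY₁ hC₁ (-(1 / 2))
  have pY₂ := conj_rpow_pos hY₂ hC₂ (-(1 / 2))
  have pY := conj_rpow_pos (comb hY₁ hY₂) hC (-(1 / 2))
  have hper := persp_jensen_gen hF (K := K) (L := L) pX₁ pX₂ pY₁ pY₂ pY (split X₁ X₂) (split Y₁ Y₂)
  have g1 := hG.jensen K L _ _ hKL (persp_pos hF pX₁ pY₁) (persp_pos hF pX₂ pY₂)
  have g2 := g1.trans (hG.mono _ _
    (aux_conj_pos hKL (persp_pos hF pX₁ pY₁) (persp_pos hF pX₂ pY₂)) hper)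
  rw [hK, hL, conjform _ _ _ h0, conjform _ _ _ h1', ← add_mul, ← mul_add] at g2
  have g3 := star_left_conjugate_le_conjugate g2 R
  rw [hRs] at g3
  refine le_trans (le_of_eq ?_) g3
  change _ = R * (Z * (α • Hmap F G X₁ Y₁ C₁ + (1 - α) • Hmap F G X₂ Y₂ C₂) * Z) * R
  calc _ = (R * Z) * (α • Hmap F G X₁ Y₁ C₁ + (1 - α) • Hmap F G X₂ Y₂ C₂) * (Z * R) := by
        rw [hRZ, hZR, one_mul, mul_one]
    _ = _ := by simp only [mul_assoc]

lemma integrand_cont {p : ℝ} {X Y : A} (hX : IsStrictlyPositive X) (hY : IsStrictlyPositive Y) :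
    ContinuousOn (fun l : ℝ => (persp (fun a : A => (l • a ^ p + (1 - l) • (1 : A)) ^ (1 / p))
      X Y) ^ (1 - p)) (Set.Icc 0 1) := by
  have hW := (conj_rpow_pos hX hY (-(1 / 2))).rpow _ p
  set W := (Y ^ (-(1 / 2) : ℝ) * X * Y ^ (-(1 / 2) : ℝ)) ^ p with hWdef
  have hp1 : ∀ l ∈ Set.Icc (0:ℝ) 1, IsStrictlyPositive (l • W + (1 - l) • (1 : A)) := by
    intro l hl
    rcases hl.1.eq_or_lt with h | h
    · subst h; simp
    · exact (hW.smul h).add_nonneg (smul_nonneg (by linarith [hl.2]) zero_le_one)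
  have c1 : ContinuousOn (fun l : ℝ => (l • W + (1 - l) • (1 : A)) ^ (1 / p)) (Set.Icc 0 1) :=
    (CFC.continuousOn_rpow (A := A) (1 / p)).comp (by fun_prop) hp1
  have c2 : ContinuousOn (fun l : ℝ => Y ^ (1 / 2 : ℝ) *
      (l • W + (1 - l) • (1 : A)) ^ (1 / p) * Y ^ (1 / 2 : ℝ)) (Set.Icc 0 1) :=
    (continuousOn_const.mul c1).mul continuousOn_const
  exact (CFC.continuousOn_rpow (A := A) (1 - p)).comp c2
    (fun l hl => conj_rpow_pos ((hp1 l hl).rpow _ _) hY _)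

end AbstractPart2
section MatrixBridge

open scoped MatrixOrder Matrix.Norms.L2Operator

variable {n : ℕ}

lemma mpow_eq_rpow {A : Matrix (Fin n) (Fin n) ℂ} (hA : A.PosDef) (q : ℝ) : mpow A q = A ^ q := by
  have hs : IsStrictlyPositive A := Matrix.isStrictlyPositive_iff_posDef.2 hA
  rw [CFC.rpow_eq_cfc_real hs.nonneg, hA.isHermitian.cfc_eq, mpow, dif_pos hA.isHermitian]
  rfl

lemma mpow_posDef {A : Matrix (Fin n) (Fin n) ℂ} (hA : A.PosDef) (q : ℝ) : (mpow A q).PosDef := by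
  have hs : IsStrictlyPositive A := Matrix.isStrictlyPositive_iff_posDef.2 hA
  rw [mpow_eq_rpow hA, ← Matrix.isStrictlyPositive_iff_posDef]
  exact hs.rpow A q

lemma mpow_smul_one {t : ℝ} (ht : 0 < t) (q : ℝ) :
    mpow (t • (1 : Matrix (Fin n) (Fin n) ℂ)) q = (t ^ q) • 1 := by
  have hs : IsStrictlyPositive (t • (1 : Matrix (Fin n) (Fin n) ℂ)) :=
    (isStrictlyPositive_one (A := Matrix (Fin n) (Fin n) ℂ)).smul ht
  rw [mpow_eq_rpow (Matrix.isStrictlyPositive_iff_posDef.1 hs), CFC.rpow_eq_cfc_real hs.nonneg,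
    ← Algebra.algebraMap_eq_smul_one, cfc_algebraMap, Algebra.algebraMap_eq_smul_one]

/-- The integrand of `Pmap`. -/
noncomputable def integrandP (p l : ℝ) (A B C : Matrix (Fin n) (Fin n) ℂ) :
    Matrix (Fin n) (Fin n) ℂ :=
  mpow
    (mpow (mpow C (-(1 / 2)) * B * mpow C (-(1 / 2))) (1 / 2) *
      mpow
        (l • mpow
            (mpow (mpow C (-(1 / 2)) * B * mpow C (-(1 / 2))) (-(1 / 2)) *
              (mpow C (-(1 / 2)) * A * mpow C (-(1 / 2))) *
                mpow (mpow C (-(1 / 2)) * B * mpow C (-(1 / 2))) (-(1 / 2))) p +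
          (1 - l) • 1)
        (1 / p) *
      mpow (mpow C (-(1 / 2)) * B * mpow C (-(1 / 2))) (1 / 2))
    (1 - p)

lemma integrandP_eq {p l : ℝ} (hp0 : 0 < p) (hp1 : p ≤ 1) (hl0 : 0 ≤ l) (hl1 : l ≤ 1)
    {A B C : Matrix (Fin n) (Fin n) ℂ} (hA : A.PosDef) (hB : B.PosDef) (hC : C.PosDef) :
    integrandP p l A B C =
      (persp (fun a => (l • a ^ p + (1 - l) • (1 : Matrix (Fin n) (Fin n) ℂ)) ^ (1 / p))
        (C ^ (-(1 / 2) : ℝ) * A * C ^ (-(1 / 2) : ℝ))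
        (C ^ (-(1 / 2) : ℝ) * B * C ^ (-(1 / 2) : ℝ))) ^ (1 - p) := by
  have sA : IsStrictlyPositive A := Matrix.isStrictlyPositive_iff_posDef.2 hA
  have sB : IsStrictlyPositive B := Matrix.isStrictlyPositive_iff_posDef.2 hB
  have sC : IsStrictlyPositive C := Matrix.isStrictlyPositive_iff_posDef.2 hC
  have sX := conj_rpow_pos sA sC (-(1 / 2))
  have sY := conj_rpow_pos sB sC (-(1 / 2))
  have sW := conj_rpow_pos sX sY (-(1 / 2))
  have sP : IsStrictlyPositive
      (l • (((C ^ (-(1 / 2) : ℝ) * B * C ^ (-(1 / 2) : ℝ)) ^ (-(1 / 2) : ℝ) *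
        (C ^ (-(1 / 2) : ℝ) * A * C ^ (-(1 / 2) : ℝ)) *
        (C ^ (-(1 / 2) : ℝ) * B * C ^ (-(1 / 2) : ℝ)) ^ (-(1 / 2) : ℝ))) ^ p +
        (1 - l) • (1 : Matrix (Fin n) (Fin n) ℂ)) := by
    rcases hl0.eq_or_lt with h | h
    · subst h; simp
    · exact ((sW.rpow _ p).smul h).add_nonneg (smul_nonneg (by linarith) zero_le_one)
  have sQ := conj_rpow_pos (sP.rpow _ (1 / p)) sY (1 / 2)
  unfold integrandP persp
  rw [mpow_eq_rpow hC]
  rw [mpow_eq_rpow (Matrix.isStrictlyPositive_iff_posDef.1 sY),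
    mpow_eq_rpow (Matrix.isStrictlyPositive_iff_posDef.1 sY)]
  rw [mpow_eq_rpow (Matrix.isStrictlyPositive_iff_posDef.1 sW)]
  rw [mpow_eq_rpow (Matrix.isStrictlyPositive_iff_posDef.1 sP)]
  rw [mpow_eq_rpow (Matrix.isStrictlyPositive_iff_posDef.1 sQ)]

lemma integrandP_concave {p l : ℝ} (hp0 : 0 < p) (hp1 : p ≤ 1) (hl0 : 0 ≤ l) (hl1 : l ≤ 1)
    {A₁ B₁ C₁ A₂ B₂ C₂ : Matrix (Fin n) (Fin n) ℂ} (hA₁ : A₁.PosDef) (hB₁ : B₁.PosDef)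
    (hC₁ : C₁.PosDef) (hA₂ : A₂.PosDef) (hB₂ : B₂.PosDef) (hC₂ : C₂.PosDef)
    {α : ℝ} (h0 : 0 ≤ α) (h1 : α ≤ 1)
    (hA : (α • A₁ + (1 - α) • A₂).PosDef) (hB : (α • B₁ + (1 - α) • B₂).PosDef)
    (hC : (α • C₁ + (1 - α) • C₂).PosDef) :
    (mpow (α • C₁ + (1 - α) • C₂) (1 / 2) *
      integrandP p l (α • A₁ + (1 - α) • A₂) (α • B₁ + (1 - α) • B₂) (α • C₁ + (1 - α) • C₂) *
      mpow (α • C₁ + (1 - α) • C₂) (1 / 2) -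
      (α • (mpow C₁ (1 / 2) * integrandP p l A₁ B₁ C₁ * mpow C₁ (1 / 2)) +
       (1 - α) • (mpow C₂ (1 / 2) * integrandP p l A₂ B₂ C₂ * mpow C₂ (1 / 2)))).PosSemidef := by
  rw [← Matrix.le_iff, integrandP_eq hp0 hp1 hl0 hl1 hA₁ hB₁ hC₁,
    integrandP_eq hp0 hp1 hl0 hl1 hA₂ hB₂ hC₂, integrandP_eq hp0 hp1 hl0 hl1 hA hB hC,
    mpow_eq_rpow hC₁, mpow_eq_rpow hC₂, mpow_eq_rpow hC]
  exact Hmap_concave (JenMap.powerMean hp0 hp1 hl0 hl1)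
    (JenMap.rpow (A := Matrix (Fin n) (Fin n) ℂ) (q := 1 - p) ⟨by linarith, by linarith⟩)
    (Matrix.isStrictlyPositive_iff_posDef.2 hA₁) (Matrix.isStrictlyPositive_iff_posDef.2 hA₂)
    (Matrix.isStrictlyPositive_iff_posDef.2 hB₁) (Matrix.isStrictlyPositive_iff_posDef.2 hB₂)
    (Matrix.isStrictlyPositive_iff_posDef.2 hC₁) (Matrix.isStrictlyPositive_iff_posDef.2 hC₂)
    h0 h1

lemma integrandP_cont {p : ℝ} (hp0 : 0 < p) (hp1 : p ≤ 1)
    {A B C : Matrix (Fin n) (Fin n) ℂ} (hA : A.PosDef) (hB : B.PosDef) (hC : C.PosDef) :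
    ContinuousOn (fun l => integrandP p l A B C) (Set.Icc 0 1) := by
  have sA : IsStrictlyPositive A := Matrix.isStrictlyPositive_iff_posDef.2 hA
  have sB : IsStrictlyPositive B := Matrix.isStrictlyPositive_iff_posDef.2 hB
  have sC : IsStrictlyPositive C := Matrix.isStrictlyPositive_iff_posDef.2 hC
  have := integrand_cont (p := p) (conj_rpow_pos sA sC (-(1 / 2))) (conj_rpow_pos sB sC (-(1 / 2)))
  exact this.congr fun l hl => integrandP_eq hp0 hp1 hl.1 hl.2 hA hB hC

end MatrixBridge

section MatrixIntegral

variable {n : ℕ}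

lemma gen_integral_nonneg {E : Type*} [NormedAddCommGroup E] [NormedSpace ℝ E]
    [FiniteDimensional ℝ E] {f f₁ f₂ : ℝ → E} (T T₁ T₂ : E →ₗ[ℝ] E)
    (hf : ContinuousOn f (Set.Icc 0 1)) (hf₁ : ContinuousOn f₁ (Set.Icc 0 1))
    (hf₂ : ContinuousOn f₂ (Set.Icc 0 1)) (a b : ℝ) (φ : E →ₗ[ℝ] ℝ)
    (h : ∀ l ∈ Set.Icc (0 : ℝ) 1, 0 ≤ φ (T (f l) - (a • T₁ (f₁ l) + b • T₂ (f₂ l)))) :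
    0 ≤ φ (T (∫ l in Set.Icc (0 : ℝ) 1, f l) -
      (a • T₁ (∫ l in Set.Icc (0 : ℝ) 1, f₁ l) + b • T₂ (∫ l in Set.Icc (0 : ℝ) 1, f₂ l))) := by
  have i : IntegrableOn f (Set.Icc 0 1) := hf.integrableOn_compact isCompact_Icc
  have i₁ : IntegrableOn f₁ (Set.Icc 0 1) := hf₁.integrableOn_compact isCompact_Icc
  have i₂ : IntegrableOn f₂ (Set.Icc 0 1) := hf₂.integrableOn_compact isCompact_Icc
  let L := LinearMap.toContinuousLinearMap (φ.comp T)
  let L₁ := LinearMap.toContinuousLinearMap (φ.comp T₁)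
  let L₂ := LinearMap.toContinuousLinearMap (φ.comp T₂)
  have e : φ (T (∫ l in Set.Icc (0 : ℝ) 1, f l)) = ∫ l in Set.Icc (0 : ℝ) 1, φ (T (f l)) :=
    (L.integral_comp_comm i).symm
  have e₁ : φ (T₁ (∫ l in Set.Icc (0 : ℝ) 1, f₁ l)) = ∫ l in Set.Icc (0 : ℝ) 1, φ (T₁ (f₁ l)) :=
    (L₁.integral_comp_comm i₁).symm
  have e₂ : φ (T₂ (∫ l in Set.Icc (0 : ℝ) 1, f₂ l)) = ∫ l in Set.Icc (0 : ℝ) 1, φ (T₂ (f₂ l)) :=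
    (L₂.integral_comp_comm i₂).symm
  have j : IntegrableOn (fun l => φ (T (f l))) (Set.Icc 0 1) := L.integrable_comp i
  have j₁ : IntegrableOn (fun l => φ (T₁ (f₁ l))) (Set.Icc 0 1) := L₁.integrable_comp i₁
  have j₂ : IntegrableOn (fun l => φ (T₂ (f₂ l))) (Set.Icc 0 1) := L₂.integrable_comp i₂
  have j₃ : IntegrableOn (fun l => a * φ (T₁ (f₁ l)) + b * φ (T₂ (f₂ l))) (Set.Icc 0 1) :=
    (j₁.const_mul a).add (j₂.const_mul b)
  have key := setIntegral_nonneg (μ := volume) measurableSet_Icc h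
  simp only [map_sub, map_add, map_smul, smul_eq_mul] at key ⊢
  rw [e, e₁, e₂, ← integral_const_mul, ← integral_const_mul,
    ← integral_add (j₁.const_mul a) (j₂.const_mul b), ← integral_sub j j₃]
  exact key

lemma posSemidef_of_functionals {M : Matrix (Fin n) (Fin n) ℂ}
    (h : ∀ φ : Matrix (Fin n) (Fin n) ℂ →ₗ[ℝ] ℝ,
      (∀ N : Matrix (Fin n) (Fin n) ℂ, N.PosSemidef → 0 ≤ φ N) → 0 ≤ φ M) : M.PosSemidef := by
  have herm : M.IsHermitian := by
    have hz : ∀ φ : Matrix (Fin n) (Fin n) ℂ →ₗ[ℝ] ℝ,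
        (∀ N : Matrix (Fin n) (Fin n) ℂ, N.PosSemidef → φ N = 0) → φ M = 0 := by
      intro φ hφ
      have h1 := h φ (fun N hN => (hφ N hN).ge)
      have h2 := h (-φ) (fun N hN => by simp [hφ N hN])
      simp only [LinearMap.neg_apply] at h2
      linarith
    refine Matrix.IsHermitian.ext fun i j => ?_
    let φr : Matrix (Fin n) (Fin n) ℂ →ₗ[ℝ] ℝ :=
      { toFun := fun N => (N j i).re - (N i j).re
        map_add' := fun x y => by simp; ring
        map_smul' := fun c x => by simp; ring }
    let φi : Matrix (Fin n) (Fin n) ℂ →ₗ[ℝ] ℝ :=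
      { toFun := fun N => (N j i).im + (N i j).im
        map_add' := fun x y => by simp; ring
        map_smul' := fun c x => by simp; ring }
    have a1 : (M j i).re - (M i j).re = 0 := hz φr fun N hN => by
      have := congrArg Complex.re (hN.isHermitian.apply i j)
      change (N j i).re - (N i j).re = 0
      simp at this
      linarith
    have a2 : (M j i).im + (M i j).im = 0 := hz φi fun N hN => by
      have := congrArg Complex.im (hN.isHermitian.apply i j)
      change (N j i).im + (N i j).im = 0
      simp at this
      linarith
    apply Complex.ext <;> simp <;> linarith
  refine Matrix.PosSemidef.of_dotProduct_mulVec_nonneg herm fun x => ?_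
  rw [Complex.nonneg_iff]
  refine ⟨?_, (herm.im_star_dotProduct_mulVec_self x).symm⟩
  let φ : Matrix (Fin n) (Fin n) ℂ →ₗ[ℝ] ℝ :=
    { toFun := fun N => (star x ⬝ᵥ (N *ᵥ x)).re
      map_add' := fun u v => by simp [Matrix.add_mulVec, dotProduct_add]
      map_smul' := fun c u => by simp [Matrix.smul_mulVec, dotProduct_smul] }
  exact h φ fun N hN => (Complex.nonneg_iff.1 (hN.dotProduct_mulVec_nonneg x)).1

/-- Conjugation as a real-linear map. -/
noncomputable def conjL (M : Matrix (Fin n) (Fin n) ℂ) :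
    Matrix (Fin n) (Fin n) ℂ →ₗ[ℝ] Matrix (Fin n) (Fin n) ℂ :=
  (LinearMap.mulRight ℝ M).comp (LinearMap.mulLeft ℝ M)

lemma Pmap_eq (p : ℝ) (A B C : Matrix (Fin n) (Fin n) ℂ) : Pmap p A B C =
    (1 / p) • (mpow C (1 / 2) * (∫ l in Set.Icc (0:ℝ) 1, integrandP p l A B C) *
      mpow C (1 / 2)) := rfl

lemma comb_posDef {U V : Matrix (Fin n) (Fin n) ℂ} (hU : U.PosDef) (hV : V.PosDef) {α : ℝ}
    (h0 : 0 ≤ α) (h1 : α ≤ 1) : (α • U + (1 - α) • V).PosDef := by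
  rcases h0.eq_or_lt with h | h
  · subst h; simpa using hV
  · refine (hU.smul h).add_posSemidef (hV.posSemidef.smul (by linarith))

lemma Pmap_concave {p : ℝ} (hp0 : 0 < p) (hp1 : p ≤ 1)
    {A₁ B₁ C₁ A₂ B₂ C₂ : Matrix (Fin n) (Fin n) ℂ} (hA₁ : A₁.PosDef) (hB₁ : B₁.PosDef)
    (hC₁ : C₁.PosDef) (hA₂ : A₂.PosDef) (hB₂ : B₂.PosDef) (hC₂ : C₂.PosDef)
    {α : ℝ} (h0 : 0 ≤ α) (h1 : α ≤ 1) :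
    (Pmap p (α • A₁ + (1 - α) • A₂) (α • B₁ + (1 - α) • B₂) (α • C₁ + (1 - α) • C₂) -
        (α • Pmap p A₁ B₁ C₁ + (1 - α) • Pmap p A₂ B₂ C₂)).PosSemidef := by
  have hA := comb_posDef hA₁ hA₂ h0 h1
  have hB := comb_posDef hB₁ hB₂ h0 h1
  have hC := comb_posDef hC₁ hC₂ h0 h1
  have key : (conjL (mpow (α • C₁ + (1 - α) • C₂) (1 / 2)) (∫ l in Set.Icc (0:ℝ) 1, integrandP p l
        (α • A₁ + (1 - α) • A₂) (α • B₁ + (1 - α) • B₂) (α • C₁ + (1 - α) • C₂)) -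
      (α • conjL (mpow C₁ (1 / 2)) (∫ l in Set.Icc (0:ℝ) 1, integrandP p l A₁ B₁ C₁) +
      (1 - α) • conjL (mpow C₂ (1 / 2))
        (∫ l in Set.Icc (0:ℝ) 1, integrandP p l A₂ B₂ C₂))).PosSemidef := by
    refine posSemidef_of_functionals fun φ hφ => ?_
    refine gen_integral_nonneg _ _ _ (integrandP_cont hp0 hp1 hA hB hC)
      (integrandP_cont hp0 hp1 hA₁ hB₁ hC₁) (integrandP_cont hp0 hp1 hA₂ hB₂ hC₂) _ _ φ ?_
    intro l hl
    exact hφ _ (integrandP_concave hp0 hp1 hl.1 hl.2 hA₁ hB₁ hC₁ hA₂ hB₂ hC₂ h0 h1 hA hB hC)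
  have key2 := key.smul (show (0:ℝ) ≤ 1 / p by positivity)
  rw [Pmap_eq, Pmap_eq, Pmap_eq]
  convert key2 using 1
  simp only [smul_sub, smul_add, smul_comm (1 / p)]
  rfl

end MatrixIntegral
lemma sandwich_smul_one {n : ℕ} (a b c : ℝ) :
    (a • (1 : Matrix (Fin n) (Fin n) ℂ)) * (b • 1) * (c • 1) = (a * b * c) • 1 := by
  simp [smul_smul, mul_comm, mul_left_comm]

lemma rpow_half_neg_conj {a b : ℝ} (hb : 0 < b) :
    b ^ (-(1 / 2) : ℝ) * a * b ^ (-(1 / 2) : ℝ) = a / b := by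
  have : b ^ (-(1 / 2) : ℝ) * b ^ (-(1 / 2) : ℝ) = b⁻¹ := by
    rw [← Real.rpow_add hb, ← Real.rpow_neg_one]; norm_num
  calc _ = a * (b ^ (-(1 / 2) : ℝ) * b ^ (-(1 / 2) : ℝ)) := by ring
    _ = _ := by rw [this, div_eq_mul_inv]

lemma rpow_half_conj {a b : ℝ} (hb : 0 < b) :
    b ^ (1 / 2 : ℝ) * a * b ^ (1 / 2 : ℝ) = a * b := by
  have : b ^ (1 / 2 : ℝ) * b ^ (1 / 2 : ℝ) = b := by
    rw [← Real.rpow_add hb]; norm_num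
  calc _ = a * (b ^ (1 / 2 : ℝ) * b ^ (1 / 2 : ℝ)) := by ring
    _ = _ := by rw [this]

lemma affine_pos {r l : ℝ} (hr : 0 < r) (h0 : 0 ≤ l) (h1 : l ≤ 1) : 0 < l * r + (1 - l) := by
  rcases h0.eq_or_lt with h | h
  · subst h; norm_num
  · have := mul_pos h hr
    linarith

lemma integrandP_scalar {n : ℕ} {p l t₁ t₂ t₃ : ℝ} (hp0 : 0 < p) (h1 : 0 < t₁) (h2 : 0 < t₂)
    (h3 : 0 < t₃) (hl0 : 0 ≤ l) (hl1 : l ≤ 1) :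
    integrandP p l (t₁ • (1 : Matrix (Fin n) (Fin n) ℂ)) (t₂ • 1) (t₃ • 1) =
      ((t₂ / t₃) ^ (1 - p) * (l * (t₁ / t₂) ^ p + (1 - l)) ^ (1 / p - 1)) • 1 := by
  have hy : 0 < t₂ / t₃ := by positivity
  have hx : 0 < t₁ / t₃ := by positivity
  have hw : 0 < t₁ / t₂ := by positivity
  have hr : 0 < (t₁ / t₂) ^ p := Real.rpow_pos_of_pos hw p
  have hs := affine_pos hr hl0 hl1
  have hs' := Real.rpow_pos_of_pos hs (1 / p)
  unfold integrandP
  have e : t₁ / t₃ / (t₂ / t₃) = t₁ / t₂ := by field_simp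
  rw [mpow_smul_one h3, sandwich_smul_one, sandwich_smul_one, rpow_half_neg_conj h3,
    rpow_half_neg_conj h3, mpow_smul_one hy, mpow_smul_one hy, sandwich_smul_one,
    rpow_half_neg_conj hy, e, mpow_smul_one hw, smul_smul, ← add_smul, mpow_smul_one hs,
    sandwich_smul_one, rpow_half_conj hy, mpow_smul_one (mul_pos hs' hy),
    Real.mul_rpow hs'.le hy.le, ← Real.rpow_mul hs.le, mul_comm]
  congr 3
  field_simp

lemma scalar_integral {p r : ℝ} (hp0 : 0 < p) (hr : 0 < r) (hr1 : r ≠ 1) :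
    ∫ l in Set.Icc (0 : ℝ) 1, (l * r + (1 - l)) ^ (1 / p - 1) =
      p * (r ^ (1 / p) - 1) / (r - 1) := by
  have hr1' : r - 1 ≠ 0 := sub_ne_zero.2 hr1
  rw [integral_Icc_eq_integral_Ioc, ← intervalIntegral.integral_of_le zero_le_one]
  have hd : ∀ l ∈ Set.uIcc (0 : ℝ) 1,
      HasDerivAt (fun l : ℝ => p / (r - 1) * (l * r + (1 - l)) ^ (1 / p))
        ((l * r + (1 - l)) ^ (1 / p - 1)) l := by
    intro l hl
    rw [Set.uIcc_of_le zero_le_one] at hl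
    have hs := affine_pos hr hl.1 hl.2
    have h1 : HasDerivAt (fun l : ℝ => l * r + (1 - l)) (r - 1) l := by
      have := ((hasDerivAt_id l).mul_const r).add ((hasDerivAt_id l).const_sub 1)
      refine this.congr_deriv ?_
      ring
    have h2 := (h1.rpow_const (p := 1 / p) (Or.inl hs.ne')).const_mul (p / (r - 1))
    refine h2.congr_deriv ?_
    field_simp
  have hc : ContinuousOn (fun l : ℝ => (l * r + (1 - l)) ^ (1 / p - 1)) (Set.uIcc 0 1) := by
    rw [Set.uIcc_of_le zero_le_one]
    exact ContinuousOn.rpow_const (by fun_prop)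
      (fun l hl => Or.inl (affine_pos hr hl.1 hl.2).ne')
  rw [intervalIntegral.integral_eq_sub_of_hasDerivAt hd hc.intervalIntegrable]
  simp
  ring

lemma Pmap_scalar {n : ℕ} {p t₁ t₂ t₃ : ℝ} (hp0 : 0 < p) (h1 : 0 < t₁) (h2 : 0 < t₂)
    (h3 : 0 < t₃) :
    Pmap p (t₁ • (1 : Matrix (Fin n) (Fin n) ℂ)) (t₂ • 1) (t₃ • 1) =
      (1 / p * ((t₂ / t₃) ^ (1 - p) *
        (∫ l in Set.Icc (0 : ℝ) 1, (l * (t₁ / t₂) ^ p + (1 - l)) ^ (1 / p - 1)) * t₃)) • 1 := by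
  rw [Pmap_eq, setIntegral_congr_fun measurableSet_Icc
    (fun l hl => integrandP_scalar hp0 h1 h2 h3 hl.1 hl.2), integral_smul_const,
    mpow_smul_one h3, sandwich_smul_one, rpow_half_conj h3, smul_smul, integral_const_mul]

theorem stmt18 (p : ℝ) (hp0 : 0 < p) (hp1 : p ≤ 1) :
    (∀ (n : ℕ) (A₁ B₁ C₁ A₂ B₂ C₂ : Matrix (Fin n) (Fin n) ℂ),
      A₁.PosDef → B₁.PosDef → C₁.PosDef → A₂.PosDef → B₂.PosDef → C₂.PosDef →
      ∀ α : ℝ, 0 ≤ α → α ≤ 1 →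
      (Pmap p (α • A₁ + (1 - α) • A₂) (α • B₁ + (1 - α) • B₂)
          (α • C₁ + (1 - α) • C₂) -
        (α • Pmap p A₁ B₁ C₁ + (1 - α) • Pmap p A₂ B₂ C₂)).PosSemidef) ∧
    (∀ t₁ t₂ t₃ : ℝ, 0 < t₁ → 0 < t₂ → 0 < t₃ → t₁ ≠ t₂ →
      Pmap p (t₁ • (1 : Matrix (Fin 1) (Fin 1) ℂ)) (t₂ • 1) (t₃ • 1) =
        ((t₁ - t₂) / (t₁ ^ p - t₂ ^ p) * t₃ ^ p) • 1) ∧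
    (∀ t₁ t₃ : ℝ, 0 < t₁ → 0 < t₃ →
      Pmap p (t₁ • (1 : Matrix (Fin 1) (Fin 1) ℂ)) (t₁ • 1) (t₃ • 1) =
        ((1 / p) * t₁ ^ (1 - p) * t₃ ^ p) • 1) := by
  refine ⟨?_, ?_, ?_⟩
  · intro n A₁ B₁ C₁ A₂ B₂ C₂ hA₁ hB₁ hC₁ hA₂ hB₂ hC₂ α h0 h1
    exact Pmap_concave hp0 hp1 hA₁ hB₁ hC₁ hA₂ hB₂ hC₂ h0 h1
  · intro t₁ t₂ t₃ h1 h2 h3 hne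
    have hw : 0 < t₁ / t₂ := by positivity
    have hr : 0 < (t₁ / t₂) ^ p := Real.rpow_pos_of_pos hw p
    have hpne : t₁ ^ p ≠ t₂ ^ p := fun h =>
      hne ((Real.rpow_left_inj h1.le h2.le hp0.ne').1 h)
    have q2 : 0 < t₂ ^ p := Real.rpow_pos_of_pos h2 p
    have q3 : 0 < t₃ ^ p := Real.rpow_pos_of_pos h3 p
    have hr1 : (t₁ / t₂) ^ p ≠ 1 := by
      rw [Real.div_rpow h1.le h2.le]
      intro h
      rw [div_eq_one_iff_eq q2.ne'] at h
      exact hpne h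
    rw [Pmap_scalar hp0 h1 h2 h3, scalar_integral hp0 hr hr1]
    congr 1
    have hsub : t₁ ^ p - t₂ ^ p ≠ 0 := sub_ne_zero.2 hpne
    have hsub' : t₁ ^ p / t₂ ^ p - 1 ≠ 0 := by
      rw [← Real.div_rpow h1.le h2.le]; exact sub_ne_zero.2 hr1
    have e : ((t₁ / t₂) ^ p) ^ (1 / p) = t₁ / t₂ := by
      rw [← Real.rpow_mul hw.le, mul_one_div_cancel hp0.ne', Real.rpow_one]
    rw [e, Real.div_rpow h1.le h2.le, Real.rpow_sub (by positivity), Real.rpow_one,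
      Real.div_rpow h2.le h3.le]
    have e3 : t₁ ^ p / t₂ ^ p - 1 = (t₁ ^ p - t₂ ^ p) / t₂ ^ p := by field_simp
    rw [e3]
    field_simp
  · intro t₁ t₃ h1 h3
    have q3 : 0 < t₃ ^ p := Real.rpow_pos_of_pos h3 p
    have q1 : 0 < t₁ ^ p := Real.rpow_pos_of_pos h1 p
    rw [Pmap_scalar hp0 h1 h1 h3]
    congr 1
    rw [div_self h1.ne', Real.div_rpow h1.le h3.le, Real.rpow_sub h3, Real.rpow_one]
    simp
    field_simp
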